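/- Let R be a commutative Noetherian local ring, let M, N be finitely generated R-modules, and let n ≥ 1 be an integer. If depth_R(M ⊗_R N) ≥ n, depth_R(N) ≥ n−1, and Ext^i_R(Tr M, N) has finite length for all i = 1, …, n, then Ext^i_R(Tr M, N) = 0 for all i = 1, …, n. -/

import Mathlib

/-!
Let `T = Tr M` be presented by the dual of `d`, and extend this presentation to a projective
resolution `P` of `T`. Write `Q_i` for the cokernel of `Hom(P_{i-1}, N) → Hom(P_i, N)`. Then
`Ext^i(T, N)` is the kernel of `Q_i → Hom(P_{i+1}, N)`, and the cokernel of this map is `Q_{i+1}`.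
Since a finite free module is reflexive and `F ⊗ N ≅ Hom(F*, N)`, right exactness of the tensor
product gives `Q_1 ≅ M ⊗ N` (`nonempty_equiv`).

By induction, `depth Q_i ≥ n - i + 1` and `Ext^i(T, N) = 0` for `1 ≤ i ≤ n`. Since
`depth Q_i ≥ 1`, its finite length submodule `Ext^i(T, N)` is zero
(`subsingleton_of_finiteLength`). Hence `0 → Q_i → Hom(P_{i+1}, N) → Q_{i+1} → 0` is exact, and as
`Hom(P_{i+1}, N)` has depth at least `depth N ≥ n - 1` (`ext_subsingleton_hom`), the lower bound
on the depth drops by one from `Q_i` to `Q_{i+1}` (`ext_subsingleton_of_shortExact`). The induction is carried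
out in `core`.

Every vanishing statement for `Ext` is read off a projective resolution as the
statement that each cocycle is a coboundary (`ext_zero_iff`, `ext_succ_iff`).
-/

open CategoryTheory TensorProduct

/-- The Ext group `Ext^i_R(M,N)` as a type. -/
noncomputable def ExtM (R : Type) [CommRing R] (M N : Type) [AddCommGroup M] [Module R M]
    [AddCommGroup N] [Module R N] (i : ℕ) : Type :=
  ((Ext R (ModuleCat R) i).obj (Opposite.op (ModuleCat.of R M))).obj (ModuleCat.of R N)


noncomputable instance (R : Type) [CommRing R] (M N : Type) [AddCommGroup M] [Module R M]
    [AddCommGroup N] [Module R N] (i : ℕ) : AddCommGroup (ExtM R M N i) :=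
  inferInstanceAs (AddCommGroup
    (((Ext R (ModuleCat R) i).obj (Opposite.op (ModuleCat.of R M))).obj (ModuleCat.of R N)))

noncomputable instance (R : Type) [CommRing R] (M N : Type) [AddCommGroup M] [Module R M]
    [AddCommGroup N] [Module R N] (i : ℕ) : Module R (ExtM R M N i) :=
  inferInstanceAs (Module R
    (((Ext R (ModuleCat R) i).obj (Opposite.op (ModuleCat.of R M))).obj (ModuleCat.of R N)))

/-- The Tor group `Tor_i^R(M,N)` as a type. -/
noncomputable def TorM (R : Type) [CommRing R] (M N : Type) [AddCommGroup M] [Module R M]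
    [AddCommGroup N] [Module R N] (i : ℕ) : Type :=
  ((Tor (ModuleCat R) i).obj (ModuleCat.of R M)).obj (ModuleCat.of R N)

noncomputable instance (R : Type) [CommRing R] (M N : Type) [AddCommGroup M] [Module R M]
    [AddCommGroup N] [Module R N] (i : ℕ) : AddCommGroup (TorM R M N i) :=
  inferInstanceAs (AddCommGroup
    (((Tor (ModuleCat R) i).obj (ModuleCat.of R M)).obj (ModuleCat.of R N)))

noncomputable instance (R : Type) [CommRing R] (M N : Type) [AddCommGroup M] [Module R M]
    [AddCommGroup N] [Module R N] (i : ℕ) : Module R (TorM R M N i) :=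
  inferInstanceAs (Module R
    (((Tor (ModuleCat R) i).obj (ModuleCat.of R M)).obj (ModuleCat.of R N)))

/-- The depth of a module over a local ring, via Rees' theorem:
`depth M = inf { i | Ext^i(k, M) ≠ 0 }` (so the zero module has depth `⊤`). -/
noncomputable def depthM (R : Type) [CommRing R] [IsLocalRing R] (M : Type) [AddCommGroup M]
    [Module R M] : ℕ∞ :=
  sInf {i : ℕ∞ | ∃ n : ℕ, i = n ∧ ¬ Subsingleton (ExtM R (IsLocalRing.ResidueField R) M n)}

/-- A maximal Cohen-Macaulay module: a nonzero finitely generated module whose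
depth equals the Krull dimension of the ring. -/
def IsMCM (R : Type) [CommRing R] [IsLocalRing R] (M : Type) [AddCommGroup M] [Module R M] :
    Prop :=
  Nontrivial M ∧ Module.Finite R M ∧ (depthM R M : WithBot ℕ∞) = ringKrullDim R

/-- A regular local ring: a Noetherian local ring whose maximal ideal is generated by a
regular sequence. -/
def IsRegularLocal (S : Type) [CommRing S] [IsLocalRing S] : Prop :=
  IsNoetherianRing S ∧ ∃ xs : List S, RingTheory.Sequence.IsRegular S xs ∧
    Ideal.span {x | x ∈ xs} = IsLocalRing.maximalIdeal S


open CategoryTheory Limits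

/-! ### Vanishing of Ext in terms of a projective resolution -/

theorem ext_subsingleton_iff {R : Type} [CommRing R] {K : ModuleCat.{0} R}
    (P : ProjectiveResolution K) (N : ModuleCat.{0} R) (i : ℕ) :
    Subsingleton (ExtM R K N i) ↔ (P.complex.linearYonedaObj R N).ExactAt i := by
  have e := P.isoExt (R := R) i N
  rw [HomologicalComplex.exactAt_iff_isZero_homology, ← e.isZero_iff]
  exact ModuleCat.isZero_iff_subsingleton.symm

theorem ext_zero_iff {R : Type} [CommRing R] {K : ModuleCat.{0} R} (P : ProjectiveResolution K)
    (N : ModuleCat.{0} R) :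
    Subsingleton (ExtM R K N 0) ↔
      ∀ f : P.complex.X 0 ⟶ N, P.complex.d 1 0 ≫ f = 0 → f = 0 := by
  rw [ext_subsingleton_iff P,
    HomologicalComplex.exactAt_iff' _ 0 0 1 (by simp) (by simp),
    ShortComplex.moduleCat_exact_iff]
  change (∀ f : P.complex.X 0 ⟶ N, P.complex.d 1 0 ≫ f = 0 →
    ∃ g : P.complex.X 0 ⟶ N, P.complex.d 0 0 ≫ g = f) ↔ _
  simp [eq_comm]

theorem ext_succ_iff {R : Type} [CommRing R] {K : ModuleCat.{0} R} (P : ProjectiveResolution K)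
    (N : ModuleCat.{0} R) (i : ℕ) :
    Subsingleton (ExtM R K N (i+1)) ↔
      ∀ f : P.complex.X (i+1) ⟶ N, P.complex.d (i+2) (i+1) ≫ f = 0 →
        ∃ g : P.complex.X i ⟶ N, P.complex.d (i+1) i ≫ g = f := by
  rw [ext_subsingleton_iff P,
    HomologicalComplex.exactAt_iff' _ i (i+1) (i+2) (by simp) (by simp),
    ShortComplex.moduleCat_exact_iff]
  rfl

/-- The part of the long exact sequence `Ext^i(K, X₂) → Ext^i(K, X₃) → Ext^(i+1)(K, X₁)` that is
needed for counting depth along a short exact sequence. -/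
theorem ext_subsingleton_of_shortExact {R : Type} [CommRing R] (K : ModuleCat.{0} R)
    {S : ShortComplex (ModuleCat.{0} R)} (hS : S.ShortExact) (i : ℕ)
    (hA : Subsingleton (ExtM R K S.X₁ (i+1))) (hB : Subsingleton (ExtM R K S.X₂ i)) :
    Subsingleton (ExtM R K S.X₃ i) := by
  let P := projectiveResolution K
  have := hS.epi_g
  have := hS.mono_f
  rw [ext_succ_iff P] at hA
  -- A cocycle with values in `X₃` lifts to a cocycle with values in `X₂`: the coboundary of an
  -- arbitrary lift is a cocycle with values in `X₁`, hence a coboundary there, and is subtracted.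
  have key : ∀ f : P.complex.X i ⟶ S.X₃, P.complex.d (i+1) i ≫ f = 0 →
      ∃ h : P.complex.X i ⟶ S.X₂, h ≫ S.g = f ∧ P.complex.d (i+1) i ≫ h = 0 := by
    intro f hf
    let l := Projective.factorThru f S.g
    have hl : l ≫ S.g = f := Projective.factorThru_comp _ _
    let m := hS.exact.lift (P.complex.d (i+1) i ≫ l) (by rw [Category.assoc, hl, hf])
    have hm : m ≫ S.f = P.complex.d (i+1) i ≫ l := hS.exact.lift_f _ _
    obtain ⟨h, hh⟩ := hA m (by
      rw [← cancel_mono S.f, Category.assoc, hm, ← Category.assoc, P.complex.d_comp_d, zero_comp, zero_comp])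
    refine ⟨l - h ≫ S.f, ?_, ?_⟩
    · rw [Preadditive.sub_comp, hl, Category.assoc, S.zero, comp_zero, sub_zero]
    · rw [Preadditive.comp_sub, ← Category.assoc, hh, hm, sub_self]
  cases i with
  | zero =>
    rw [ext_zero_iff P] at hB ⊢
    intro f hf
    obtain ⟨h, rfl, hd⟩ := key f hf
    rw [hB h hd, zero_comp]
  | succ i =>
    rw [ext_succ_iff P] at hB ⊢
    intro f hf
    obtain ⟨h, rfl, hd⟩ := key f hf
    obtain ⟨g, hg⟩ := hB h hd
    exact ⟨g ≫ S.g, by rw [← Category.assoc, hg]⟩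

theorem ext_subsingleton_congr {R : Type} [CommRing R] (K : ModuleCat.{0} R) {A B : Type}
    [AddCommGroup A] [Module R A] [AddCommGroup B] [Module R B] (e : A ≃ₗ[R] B) (i : ℕ)
    (h : Subsingleton (ExtM R K A i)) : Subsingleton (ExtM R K B i) := by
  have e' := (((Ext R (ModuleCat R) i).obj (Opposite.op K)).mapIso e.toModuleIso).symm.toLinearEquiv.toEquiv
  exact @Equiv.subsingleton _ _ e' h

/-- `Hom(Q, -)` preserves the vanishing of `Ext^i(K, -)` when `Q` is projective: it commutes with
`Hom(P_j, -)` up to flipping the two arguments, and is exact. No finiteness of `Q` is needed. -/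
theorem ext_subsingleton_hom {R : Type} [CommRing R] (K : ModuleCat.{0} R) (Q N : Type)
    [AddCommGroup Q] [Module R Q] [AddCommGroup N] [Module R N] [Module.Projective R Q]
    (i : ℕ) (hN : Subsingleton (ExtM R K N i)) :
    Subsingleton (ExtM R K (Q →ₗ[R] N) i) := by
  let P := projectiveResolution K
  cases i with
  | zero =>
    have hN := (ext_zero_iff P (.of R N)).1 hN
    refine (ext_zero_iff P (.of R (Q →ₗ[R] N))).2 fun f hf => ?_
    ext x q
    have := hN (ModuleCat.ofHom (f.hom.flip q)) (by
      ext y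
      exact LinearMap.congr_fun (LinearMap.congr_fun (congrArg ModuleCat.Hom.hom hf) y) q)
    exact LinearMap.congr_fun (congrArg ModuleCat.Hom.hom this) x
  | succ i =>
    have hN := (ext_succ_iff P (.of R N) i).1 hN
    refine (ext_succ_iff P (.of R (Q →ₗ[R] N)) i).2 fun f hf => ?_
    let D : (P.complex.X i →ₗ[R] N) →ₗ[R] (P.complex.X (i+1) →ₗ[R] N) :=
      LinearMap.lcomp R N (P.complex.d (i+1) i).hom
    have hmem : ∀ q, f.hom.flip q ∈ LinearMap.range D := fun q => by
      obtain ⟨g, hg⟩ := hN (ModuleCat.ofHom (f.hom.flip q)) (by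
        ext y
        exact LinearMap.congr_fun (LinearMap.congr_fun (congrArg ModuleCat.Hom.hom hf) y) q)
      exact ⟨g.hom, congrArg ModuleCat.Hom.hom hg⟩
    obtain ⟨g, hg⟩ := Module.projective_lifting_property D.rangeRestrict
      (f.hom.flip.codRestrict _ hmem) D.surjective_rangeRestrict
    refine ⟨ModuleCat.ofHom g.flip, ?_⟩
    ext x q
    have := LinearMap.congr_fun hg q
    exact LinearMap.congr_fun (congrArg Subtype.val this) x

/-- A finite length submodule of a module of positive depth is zero: otherwise it contains a
copy of the residue field. -/
theorem subsingleton_of_finiteLength {R : Type} [CommRing R] [IsLocalRing R] {H A : Type}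
    [AddCommGroup H] [Module R H] [AddCommGroup A] [Module R A] (hH : IsFiniteLength R H)
    (f : H →ₗ[R] A) (hf : Function.Injective f)
    (hA : Subsingleton (ExtM R (IsLocalRing.ResidueField R) A 0)) : Subsingleton H := by
  by_contra hne
  rw [not_subsingleton_iff_nontrivial] at hne
  obtain ⟨_, _⟩ := isFiniteLength_iff_isNoetherian_isArtinian.1 hH
  obtain ⟨S, hS⟩ := IsAtomic.exists_atom (Submodule R H)
  have hs : IsSimpleModule R S := isSimpleModule_iff_isAtom.2 hS
  obtain ⟨m, hm, ⟨e⟩⟩ := isSimpleModule_iff_quot_maximal.mp hs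
  obtain rfl := IsLocalRing.eq_maximalIdeal hm
  let φ : IsLocalRing.ResidueField R →ₗ[R] A := f ∘ₗ S.subtype ∘ₗ e.symm.toLinearMap
  have hφ : Function.Injective φ :=
    hf.comp (S.subtype_injective.comp e.symm.injective)
  let P := projectiveResolution (ModuleCat.of R (IsLocalRing.ResidueField R))
  let π : P.complex.X 0 ⟶ ModuleCat.of R (IsLocalRing.ResidueField R) := P.π.f 0
  have : Epi π := inferInstanceAs (Epi (P.π.f 0))
  have hπ : P.complex.d 1 0 ≫ π = 0 := P.complex_d_comp_π_f_zero
  have hz := (ext_zero_iff P (.of R A)).1 hA (π ≫ ModuleCat.ofHom φ) (by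
    rw [← Category.assoc, hπ, zero_comp])
  have h0 : ModuleCat.ofHom φ = 0 := by
    rw [← cancel_epi π, hz, comp_zero]
  have h1 : φ 1 = 0 := LinearMap.congr_fun (congrArg ModuleCat.Hom.hom h0) 1
  exact one_ne_zero (hφ (h1.trans φ.map_zero.symm))

/-! ### The projective resolution extending a given presentation -/

section Resolution

variable {C : Type*} [Category* C] [Abelian C] [EnoughProjectives C]

theorem syzygy_comp {X Y : C} (f : X ⟶ Y) : Projective.d f ≫ f = 0 :=
  (Category.assoc _ _ _).trans ((congrArg _ (kernel.condition f)).trans comp_zero)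

/-- The chain complex starting with `d : X₁ ⟶ X₀` and continued by projective objects mapping
onto the successive kernels. -/
noncomputable def presComplex {X₀ X₁ : C} (d : X₁ ⟶ X₀) : ChainComplex C ℕ :=
  ChainComplex.mk' X₀ X₁ d (fun f => ⟨_, Projective.d f, syzygy_comp f⟩)

/-- The term in degree `n + 2` is the chosen projective mapping onto the kernel of the preceding
differential. -/
noncomputable def presComplexXIso {X₀ X₁ : C} (d : X₁ ⟶ X₀) (n : ℕ) :
    (presComplex d).X (n + 2) ≅ Projective.syzygies ((presComplex d).d (n + 1) n) :=
  ChainComplex.mk'XIso X₀ X₁ d (fun f => ⟨_, Projective.d f, syzygy_comp f⟩) n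

theorem presComplex_d {X₀ X₁ : C} (d : X₁ ⟶ X₀) (n : ℕ) :
    (presComplex d).d (n + 2) (n + 1) =
      (presComplexXIso d n).hom ≫ Projective.d ((presComplex d).d (n + 1) n) :=
  ChainComplex.mk'_d X₀ X₁ d (fun f => ⟨_, Projective.d f, syzygy_comp f⟩) n

theorem presComplex_d_1_0 {X₀ X₁ : C} (d : X₁ ⟶ X₀) : (presComplex d).d 1 0 = d :=
  ChainComplex.mk'_d_1_0 ..

theorem presComplex_exactAt_succ {X₀ X₁ : C} (d : X₁ ⟶ X₀) (n : ℕ) :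
    (presComplex d).ExactAt (n + 1) := by
  rw [HomologicalComplex.exactAt_iff' _ (n + 1 + 1) (n + 1) n (by simp) (by simp)]
  let e : (presComplex d).sc' (n + 1 + 1) (n + 1) n ≅
      ShortComplex.mk _ _ (syzygy_comp ((presComplex d).d (n + 1) n)) :=
    ShortComplex.isoMk (presComplexXIso d n) (Iso.refl _) (Iso.refl _)
      ((presComplex_d d n).symm.trans (Category.comp_id _).symm)
      ((Category.id_comp _).trans (Category.comp_id _).symm)
  exact (ShortComplex.exact_iff_of_iso e).2 (exact_d_f _)

instance presComplex_projective {X₀ X₁ : C} (d : X₁ ⟶ X₀) [Projective X₀] [Projective X₁] (n : ℕ) :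
    Projective ((presComplex d).X n) := by
  obtain (_ | _ | n) := n
  · assumption
  · assumption
  · exact Projective.of_iso (presComplexXIso d n).symm (Projective.projective_over _)

/-- The projective resolution of `Z` whose first differential is the one of a given presentation
`X₁ ⟶ X₀ ⟶ Z ⟶ 0` by projective objects. -/
noncomputable def presResolution {X₀ X₁ Z : C} (d : X₁ ⟶ X₀) [Projective X₀] [Projective X₁]
    (π : X₀ ⟶ Z) [hπ : Epi π] (w : d ≫ π = 0) (hex : (ShortComplex.mk d π w).Exact) :
    ProjectiveResolution Z where
  complex := presComplex d
  π := (ChainComplex.toSingle₀Equiv _ _).symm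
    ⟨π, (congrArg (· ≫ π) (presComplex_d_1_0 d)).trans w⟩
  quasiIso := ⟨fun n => by
    cases n
    · rw [ChainComplex.quasiIsoAt₀_iff, ShortComplex.quasiIso_iff_of_zeros' _
        ((presComplex d).shape 0 0 (by simp)) rfl rfl]
      refine (ShortComplex.exact_and_epi_g_iff_of_iso ?_).2 ⟨hex, hπ⟩
      refine ShortComplex.isoMk (Iso.refl _) (Iso.refl _) (Iso.refl _) ?_ ?_
      · exact (Category.id_comp _).trans
          ((presComplex_d_1_0 d).symm.trans (Category.comp_id _).symm)
      · exact (Category.id_comp _).trans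
          ((ChainComplex.toSingle₀Equiv_symm_apply_f_zero (C := presComplex d) (X := Z) π
            _).symm.trans (Category.comp_id _).symm)
    · rw [quasiIsoAt_iff_exactAt']
      · apply presComplex_exactAt_succ
      · apply ChainComplex.exactAt_succ_single_obj⟩

end Resolution

/-! ### The induction -/

theorem depthM_ge {R : Type} [CommRing R] [IsLocalRing R] {M : Type} [AddCommGroup M]
    [Module R M] {n i : ℕ} (h : (n : ℕ∞) ≤ depthM R M) (hi : i < n) :
    Subsingleton (ExtM R (IsLocalRing.ResidueField R) M i) := by
  by_contra hne
  have : depthM R M ≤ i := sInf_le ⟨i, rfl, hne⟩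
  exact absurd (h.trans this) (by simpa using hi)

/-- The statement for an arbitrary projective resolution `P` of `T`, with `M ⊗ N` replaced by the
cokernel of `Hom(P₀, N) → Hom(P₁, N)`, that is, by the opcycles in degree one. The opcycles in
degree `j + 1` have depth at least `n - j`, and contain `Ext^(j+1)(T, N)`. -/
theorem core {R : Type} [CommRing R] [IsLocalRing R] {T : ModuleCat.{0} R}
    (P : ProjectiveResolution T) (N : ModuleCat.{0} R) (n : ℕ)
    (hQ : ∀ i < n, Subsingleton (ExtM R (IsLocalRing.ResidueField R)
      ((P.complex.linearYonedaObj R N).opcycles 1) i))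
    (hN : ∀ i < n - 1, Subsingleton (ExtM R (IsLocalRing.ResidueField R) N i))
    (hfl : ∀ i : ℕ, 1 ≤ i → i ≤ n → IsFiniteLength R (ExtM R T N i)) :
    ∀ i : ℕ, 1 ≤ i → i ≤ n → Subsingleton (ExtM R T N i) := by
  let C := P.complex.linearYonedaObj R N
  have step : ∀ j : ℕ, j + 1 ≤ n → (∀ i, i + j < n → Subsingleton
      (ExtM R (IsLocalRing.ResidueField R) (C.opcycles (j + 1)) i)) →
      Subsingleton (ExtM R T N (j + 1)) := by
    intro j hj hd
    have e := (P.isoExt (R := R) (j+1) N)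
    exact subsingleton_of_finiteLength (A := C.opcycles (j+1)) (hfl (j+1) (by omega) hj)
      (e.hom ≫ C.homologyι (j+1)).hom ((ModuleCat.mono_iff_injective _).1 inferInstance)
      (hd 0 (by omega))
  have depth : ∀ j : ℕ, j + 1 ≤ n → ∀ i, i + j < n → Subsingleton
      (ExtM R (IsLocalRing.ResidueField R) (C.opcycles (j + 1)) i) := by
    intro j
    induction j with
    | zero => exact fun _ i hi => hQ i hi
    | succ j ih =>
      intro hj i hi
      have ih := ih (by omega)
      have h0 := (ext_subsingleton_iff P N (j+1)).1 (step j (by omega) ih)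
      have hw : C.fromOpcycles (j+1) (j+2) ≫ C.pOpcycles (j+2) = 0 := by
        rw [← cancel_epi (C.pOpcycles (j+1)), ← Category.assoc, C.p_fromOpcycles,
          C.d_pOpcycles, comp_zero]
      -- The vanishing of cohomology in degree `j + 1` makes the sequence of opcycles
      -- `0 → Q_{j+1} → Hom(P_{j+2}, N) → Q_{j+2} → 0` exact.
      let S := ShortComplex.mk _ _ hw
      have hS : S.ShortExact := by
        have hm : Mono (C.fromOpcycles (j+1) (j+2)) := by
          refine Preadditive.mono_of_isZero_kernel' _ (C.homologyIsKernel (j+1) (j+2) (by simp))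
            ((HomologicalComplex.exactAt_iff_isZero_homology _ _).1 h0)
        refine { exact := ?_, mono_f := hm, epi_g := inferInstanceAs (Epi (C.pOpcycles (j+2))) }
        have hk := C.opcyclesIsCokernel (j+1) (j+2) (by simp)
        have hex : (ShortComplex.mk _ _ (C.d_pOpcycles (j+1) (j+2))).Exact :=
          ShortComplex.exact_of_g_is_cokernel _ hk
        let φ : ShortComplex.mk _ _ (C.d_pOpcycles (j+1) (j+2)) ⟶ S :=
          { τ₁ := C.pOpcycles (j+1), τ₂ := 𝟙 _, τ₃ := 𝟙 _
            comm₁₂ := by simp [S], comm₂₃ := by simp [S] }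
        have : Epi φ.τ₁ := inferInstanceAs (Epi (C.pOpcycles (j+1)))
        have : IsIso φ.τ₂ := inferInstanceAs (IsIso (𝟙 _))
        have : Mono φ.τ₃ := inferInstanceAs (Mono (𝟙 _))
        exact (ShortComplex.exact_iff_of_epi_of_isIso_of_mono φ).1 hex
      refine ext_subsingleton_of_shortExact (.of R (IsLocalRing.ResidueField R)) hS i
        (ih (i+1) (by omega)) ?_
      have : Module.Projective R (P.complex.X (j+2)) :=
        (IsProjective.iff_projective _).2 (P.projective (j+2))
      have := ext_subsingleton_hom (.of R (IsLocalRing.ResidueField R)) (P.complex.X (j+2)) N i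
        (hN i (by omega))
      exact ext_subsingleton_congr _ (ModuleCat.homLinearEquiv (S := R)).symm i this
  rintro (_ | j) h1 h2
  · omega
  · exact step j h2 (depth j h2)

/-! ### The tensor product as a cokernel -/

/-- The evaluation map `F ⊗ N → Hom(F*, N)`, `x ⊗ y ↦ (φ ↦ φ x • y)`. -/
noncomputable def evalHom (R F N : Type) [CommRing R] [AddCommGroup F] [Module R F]
    [AddCommGroup N] [Module R N] : F ⊗[R] N →ₗ[R] (Module.Dual R F →ₗ[R] N) :=
  dualTensorHom R (Module.Dual R F) N ∘ₗ LinearMap.rTensor N (Module.Dual.eval R F)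

theorem evalHom_bijective (R F N : Type) [CommRing R] [AddCommGroup F] [Module R F]
    [AddCommGroup N] [Module R N] [Module.Free R F] [Module.Finite R F] :
    Function.Bijective (evalHom R F N) := by
  have h1 : Function.Bijective (dualTensorHom R (Module.Dual R F) N) := by
    classical
    exact (dualTensorHomEquivOfBasis (Module.Free.chooseBasis R (Module.Dual R F))).bijective
  have h2 : Function.Bijective (LinearMap.rTensor N (Module.Dual.eval R F)) :=
    (LinearEquiv.rTensor N (Module.evalEquiv R F)).bijective
  exact h1.comp h2

theorem evalHom_naturality {R F G : Type} (N : Type) [CommRing R] [AddCommGroup F] [Module R F]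
    [AddCommGroup G] [Module R G] [AddCommGroup N] [Module R N] (d : F →ₗ[R] G) (x : F ⊗[R] N) :
    evalHom R G N (d.rTensor N x) = evalHom R F N x ∘ₗ d.dualMap := by
  induction x with
  | zero => simp
  | add x y hx hy => simp only [map_add, hx, hy, LinearMap.add_comp]
  | tmul x y => ext φ; simp [evalHom]

/-- If `F → G → M → 0` is a finite free presentation, then `M ⊗ N` is the cokernel of
`Hom(F*, N) → Hom(G*, N)`. -/
theorem nonempty_equiv {R F G M N Q : Type} [CommRing R] [AddCommGroup F] [Module R F]
    [AddCommGroup G] [Module R G] [AddCommGroup N] [Module R N] [AddCommGroup M] [Module R M]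
    [AddCommGroup Q] [Module R Q]
    [Module.Free R F] [Module.Finite R F] [Module.Free R G] [Module.Finite R G]
    (d : F →ₗ[R] G) (ε : G →ₗ[R] M)
    (hsurj : Function.Surjective ε) (hker : LinearMap.ker ε = LinearMap.range d)
    (q : (Module.Dual R G →ₗ[R] N) →ₗ[R] Q) (hq : Function.Surjective q)
    (hqk : LinearMap.ker q = LinearMap.range (LinearMap.lcomp R N d.dualMap)) :
    Nonempty (M ⊗[R] N ≃ₗ[R] Q) := by
  have hex : Function.Exact (d.rTensor N) (ε.rTensor N) :=
    rTensor_exact N (LinearMap.exact_iff.2 hker) hsurj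
  let p : G ⊗[R] N →ₗ[R] Q := q ∘ₗ evalHom R G N
  have hp : Function.Surjective p := hq.comp (evalHom_bijective R G N).2
  have hk : LinearMap.ker p = LinearMap.ker (ε.rTensor N) := by
    rw [LinearMap.exact_iff.1 hex]
    ext x
    have : x ∈ LinearMap.ker p ↔ evalHom R G N x ∈ LinearMap.ker q := Iff.rfl
    rw [this, hqk]
    constructor
    · rintro ⟨y, hy⟩
      obtain ⟨z, rfl⟩ := (evalHom_bijective R F N).2 y
      refine ⟨z, (evalHom_bijective R G N).1 ?_⟩
      rw [evalHom_naturality, ← hy]; rfl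
    · rintro ⟨z, rfl⟩
      exact ⟨evalHom R F N z, (evalHom_naturality N d z).symm⟩
  exact ⟨((ε.rTensor N).quotKerEquivOfSurjective (LinearMap.rTensor_surjective N hsurj)).symm ≪≫ₗ
    Submodule.quotEquivOfEq _ _ hk.symm ≪≫ₗ p.quotKerEquivOfSurjective hp⟩

/-- Let `R` be a commutative Noetherian local ring, `M`, `N` finitely
generated modules, `n ≥ 1`. Given any finite free presentation
`F₁ = R^b → F₀ = R^a → M → 0`, with Auslander transpose
`Tr M = coker(Hom(F₀,R) → Hom(F₁,R))`: if `depth (M ⊗ N) ≥ n`, `depth N ≥ n-1` and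
`Ext^i(Tr M, N)` has finite length for `i = 1, …, n`, then `Ext^i(Tr M, N) = 0` for
`i = 1, …, n`. -/
theorem stmt8 (R : Type) [CommRing R] [IsLocalRing R] [IsNoetherianRing R]
    (M N : Type) [AddCommGroup M] [Module R M] [AddCommGroup N] [Module R N]
    [Module.Finite R M] [Module.Finite R N]
    (n : ℕ) (hn : 1 ≤ n)
    (a b : ℕ) (d : (Fin b → R) →ₗ[R] (Fin a → R)) (ε : (Fin a → R) →ₗ[R] M)
    (hsurj : Function.Surjective ε) (hker : LinearMap.ker ε = LinearMap.range d)
    (h1 : (n : ℕ∞) ≤ depthM R (M ⊗[R] N))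
    (h2 : ((n - 1 : ℕ) : ℕ∞) ≤ depthM R N)
    (h3 : ∀ i : ℕ, 1 ≤ i → i ≤ n → IsFiniteLength R
      (ExtM R (Module.Dual R (Fin b → R) ⧸ LinearMap.range d.dualMap) N i)) :
    ∀ i : ℕ, 1 ≤ i → i ≤ n → Subsingleton
      (ExtM R (Module.Dual R (Fin b → R) ⧸ LinearMap.range d.dualMap) N i) := by
  let X₀ := ModuleCat.of R (Module.Dual R (Fin b → R))
  let X₁ := ModuleCat.of R (Module.Dual R (Fin a → R))
  let D : X₁ ⟶ X₀ := ModuleCat.ofHom d.dualMap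
  let T := ModuleCat.of R (Module.Dual R (Fin b → R) ⧸ LinearMap.range d.dualMap)
  let π : X₀ ⟶ T := ModuleCat.ofHom (LinearMap.range d.dualMap).mkQ
  have hX₀ : Projective X₀ := (IsProjective.iff_projective _).1 inferInstance
  have hX₁ : Projective X₁ := (IsProjective.iff_projective _).1 inferInstance
  have hπ : Epi π := (ModuleCat.epi_iff_surjective _).2 (Submodule.mkQ_surjective _)
  have w : D ≫ π = 0 := by
    ext x
    exact (Submodule.Quotient.mk_eq_zero _).2 ⟨x, rfl⟩
  have hex : (ShortComplex.mk D π w).Exact := by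
    rw [ShortComplex.moduleCat_exact_iff]
    intro x hx
    exact (Submodule.Quotient.mk_eq_zero _).1 hx
  let P : ProjectiveResolution T := presResolution D π w hex
  let C := P.complex.linearYonedaObj R (ModuleCat.of R N)
  have hPd : P.complex.d 1 0 = D := presComplex_d_1_0 D
  let eX : (X₁ ⟶ ModuleCat.of R N) ≃ₗ[R] (Module.Dual R (Fin a → R) →ₗ[R] N) :=
    ModuleCat.homLinearEquiv (S := R)
  let q : (Module.Dual R (Fin a → R) →ₗ[R] N) →ₗ[R] C.opcycles 1 :=
    (C.pOpcycles 1).hom ∘ₗ eX.symm.toLinearMap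
  have hq : Function.Surjective q :=
    ((ModuleCat.epi_iff_surjective _).1 (inferInstanceAs (Epi (C.pOpcycles 1)))).comp
      eX.symm.surjective
  have hqk : LinearMap.ker q = LinearMap.range (LinearMap.lcomp R N d.dualMap) := by
    have hC : (ShortComplex.mk _ _ (C.d_pOpcycles 0 1)).Exact :=
      ShortComplex.exact_of_g_is_cokernel _ (C.opcyclesIsCokernel 0 1 (by simp))
    have hd : ∀ g : X₀ ⟶ ModuleCat.of R N, C.d 0 1 g = D ≫ g := fun g => by
      rw [← hPd]; rfl
    ext f
    constructor
    · intro hf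
      obtain ⟨g, hg⟩ := (ShortComplex.moduleCat_exact_iff _).1 hC (eX.symm f) hf
      refine ⟨(show X₀ ⟶ ModuleCat.of R N from g).hom, ?_⟩
      exact congrArg eX ((hd g).symm.trans hg)
    · rintro ⟨g, rfl⟩
      have : eX.symm (LinearMap.lcomp R N d.dualMap g) = C.d 0 1 (ModuleCat.ofHom (X := X₀) g) :=
        (hd _).symm
      change C.pOpcycles 1 (eX.symm _) = 0
      rw [this]
      exact ShortComplex.moduleCat_zero_apply (ShortComplex.mk _ _ (C.d_pOpcycles 0 1)) _
  obtain ⟨e⟩ := nonempty_equiv d ε hsurj hker q hq hqk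
  exact core P (ModuleCat.of R N) n
    (fun i hi => ext_subsingleton_congr (.of R (IsLocalRing.ResidueField R)) e i (depthM_ge h1 hi))
    (fun i hi => depthM_ge h2 hi) h3
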